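/- Let γ=(B,M,S,A,Â) be a market with middlemen and γ*=(B,S,A*) the associated two-sided assignment market. Then the optimum values of the two markets coincide: v_γ(N) = w_{γ*}(B∪S). -/

import Mathlib

/-!
Matching markets with middlemen (Atay, Bahel, Solymosi).

Players are of three sorts: buyers `B`, middlemen `M`, sellers `S`
(three disjoint nonempty finite types); the player set is `Player B M S = B ⊕ M ⊕ S`.
An (functional representation of a) `T`-matching assigns to each buyer either nothing
(the buyer is single), a seller (direct trade), or a middleman together with a seller
(mediated trade); distinct buyers get distinct sellers, and all agents involved lie in `T`.
A middleman may mediate several trades.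
-/

open scoped Classical

noncomputable section

/-- The set of players of a market with middlemen: buyers `B`, middlemen `M`, sellers `S`. -/
abbrev Player (B M S : Type*) := B ⊕ M ⊕ S

/-- Functional representation of a matching in the market with middlemen: each buyer is
unmatched (`none`), matched directly to a seller (`some (none, k)`), or matched to a seller
through a middleman (`some (some j, k)`). -/
abbrev MMatch (B M S : Type*) := B → Option (Option M × S)

namespace Middlemen

variable {B M S : Type*}

/-- A buyer as a player. -/
def buyer (i : B) : Player B M S := Sum.inl i

/-- A middleman as a player. -/
def mid (j : M) : Player B M S := Sum.inr (Sum.inl j)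

/-- A seller as a player. -/
def seller (k : S) : Player B M S := Sum.inr (Sum.inr k)

/-- `f` is a `T`-matching in the market with middlemen: every basic coalition used by `f`
is contained in `T` and no seller is matched to two distinct buyers.  (Buyers, middlemen
and sellers of `T` not appearing in any trade are singletons of the matching.) -/
def IsMatching (T : Finset (Player B M S)) (f : MMatch B M S) : Prop :=
  (∀ i o k, f i = some (o, k) →
      buyer i ∈ T ∧ seller k ∈ T ∧ ∀ j, o = some j → mid j ∈ T) ∧
  (∀ i i' o o' k, f i = some (o, k) → f i' = some (o', k) → i = i')

variable [Fintype B] [Fintype M] [Fintype S]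

/-- The value `Σ_{(i,k)∈μ} a_{ik} + Σ_{(i,j,k)∈μ} â_{ijk}` of a matching in the market
with middlemen with direct-trade surplus matrix `A` and mediated-trade surpluses `Ah`. -/
def mval (A : B → S → ℝ) (Ah : B → M → S → ℝ) (f : MMatch B M S) : ℝ :=
  ∑ i, (match f i with
    | none => 0
    | some (none, k) => A i k
    | some (some j, k) => Ah i j k)

/-- The TU game `v_γ` associated with the market with middlemen `γ = (B,M,S,A,Ah)`:
the worth of a coalition `T` is the maximal value of a `T`-matching. -/
def vGame (A : B → S → ℝ) (Ah : B → M → S → ℝ) (T : Finset (Player B M S)) : ℝ :=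
  sSup { r | ∃ f : MMatch B M S, IsMatching T f ∧ r = mval A Ah f }

/-- `g` is a matching of the coalition `R` in a two-sided assignment market. -/
def IsMatching2 (R : Finset (B ⊕ S)) (g : B → Option S) : Prop :=
  (∀ i k, g i = some k → Sum.inl i ∈ R ∧ Sum.inr k ∈ R) ∧
  (∀ i i' k, g i = some k → g i' = some k → i = i')

/-- The value of a two-sided matching with valuation matrix `As`. -/
def m2val (As : B → S → ℝ) (g : B → Option S) : ℝ :=
  ∑ i, (match g i with
    | none => 0
    | some k => As i k)

/-- The assignment game `w_{γ*}` of the two-sided assignment market `(B,S,As)`. -/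
def wGame (As : B → S → ℝ) (R : Finset (B ⊕ S)) : ℝ :=
  sSup { r | ∃ g : B → Option S, IsMatching2 R g ∧ r = m2val As g }

/-- The matrix `A*` of the associated two-sided assignment market:
`a*_{ik} = max_{j ∈ M} â_{ijk}`. -/
def Astar [Nonempty M] (Ah : B → M → S → ℝ) (i : B) (k : S) : ℝ :=
  Finset.univ.sup' Finset.univ_nonempty fun j => Ah i j k

/-- The two-sided matching `μ*` induced by a matching `μ` of the market with middlemen:
keep all matched buyer–seller pairs (dropping the middlemen). -/
def star (f : MMatch B M S) : B → Option S := fun i => (f i).map Prod.snd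

/-- `m(i,k)`: the lowest-indexed middleman `j` maximizing `â_{ijk}`. -/
def bestMid [Nonempty M] [LinearOrder M] (Ah : B → M → S → ℝ) (i : B) (k : S) : M :=
  (Finset.univ.filter fun j => ∀ j' : M, Ah i j' k ≤ Ah i j k).min' (by
    obtain ⟨j, -, hj⟩ := Finset.exists_max_image (Finset.univ : Finset M)
      (fun j => Ah i j k) Finset.univ_nonempty
    exact ⟨j, Finset.mem_filter.mpr ⟨Finset.mem_univ _, fun j' => hj j' (Finset.mem_univ _)⟩⟩)

/-- The matching `σ^△` of the market with middlemen induced by a two-sided matching `σ`: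
each matched pair `{i,k}` of `σ` trades through the best middleman `m(i,k)`
(and every other middleman is a singleton). -/
def triangle [Nonempty M] [LinearOrder M] (Ah : B → M → S → ℝ) (g : B → Option S) :
    MMatch B M S :=
  fun i => (g i).map fun k => (some (bestMid Ah i k), k)

/-- The core of a TU game on the finite player set `P`. -/
def core {P : Type*} [Fintype P] (v : Finset P → ℝ) : Set (P → ℝ) :=
  { x | ∑ t, x t = v Finset.univ ∧ ∀ T : Finset P, v T ≤ ∑ t ∈ T, x t }

/-- Augment a payoff vector of the two-sided market with zero payoffs to all middlemen. -/
def aug (xz : B ⊕ S → ℝ) : Player B M S → ℝ := fun t =>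
  match t with
  | Sum.inl i => xz (Sum.inl i)
  | Sum.inr (Sum.inl _) => 0
  | Sum.inr (Sum.inr k) => xz (Sum.inr k)

/-- Restrict a payoff vector of the market with middlemen to the buyers and sellers. -/
def restrictBS (X : Player B M S → ℝ) : B ⊕ S → ℝ := fun t =>
  match t with
  | Sum.inl i => X (buyer i)
  | Sum.inr k => X (seller k)

/-- The set `T ∩ (B ∪ S)` of buyers and sellers of a coalition `T`. -/
def bsPart (T : Finset (Player B M S)) : Finset (B ⊕ S) :=
  Finset.univ.filter fun t =>
    match t with
    | Sum.inl i => buyer i ∈ T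
    | Sum.inr k => (seller k : Player B M S) ∈ T

/-- The coalition `R ∪ M` consisting of the buyers and sellers of `R` together with
all middlemen. -/
def withAllMid (R : Finset (B ⊕ S)) : Finset (Player B M S) :=
  Finset.univ.filter fun t =>
    match t with
    | Sum.inl i => Sum.inl i ∈ R
    | Sum.inr (Sum.inl _) => True
    | Sum.inr (Sum.inr k) => Sum.inr k ∈ R

end Middlemen

/-!
A matching `μ` of the market with middlemen and a matching `σ` of the two-sided market are
compared through `μ ↦ μ*` (forget the middlemen) and `σ ↦ σ^△` (mediate every pair by its best
middleman). The first map does not decrease the value, because every trade of the pair `{i, k}`,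
direct or mediated, is worth at most `a*_{ik}`; the second preserves it, because the best middleman
attains `a*_{ik}`. The only players that `σ^△` adds to those of `σ` are middlemen, so the
comparison works inside every coalition that contains all of them.
-/

namespace Middlemen

section Surplus

variable {B M S : Type*} [Fintype M] [Nonempty M] (Ah : B → M → S → ℝ)

theorem le_Astar (i : B) (j : M) (k : S) : Ah i j k ≤ Astar Ah i k :=
  Finset.le_sup' (fun j ↦ Ah i j k) (Finset.mem_univ j)

theorem apply_le_apply_bestMid [LinearOrder M] (i : B) (j : M) (k : S) :
    Ah i j k ≤ Ah i (bestMid Ah i k) k := by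
  have bestMid_mem := Finset.min'_mem (Finset.univ.filter fun j ↦ ∀ j', Ah i j' k ≤ Ah i j k)
  exact (Finset.mem_filter.mp (bestMid_mem _)).2 j

theorem apply_bestMid [LinearOrder M] (i : B) (k : S) :
    Ah i (bestMid Ah i k) k = Astar Ah i k :=
  le_antisymm (le_Astar Ah i _ k)
    (Finset.sup'_le _ _ fun j _ ↦ apply_le_apply_bestMid Ah i j k)

end Surplus

section Value

variable {B M S : Type*} [Fintype B] [Fintype M] [Nonempty M]

theorem mval_le_m2val_star {A : B → S → ℝ} {Ah : B → M → S → ℝ}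
    (hAh : ∀ i j k, A i k ≤ Ah i j k) (f : MMatch B M S) :
    mval A Ah f ≤ m2val (Astar Ah) (star f) := by
  have direct_le (i : B) (k : S) : A i k ≤ Astar Ah i k :=
    (hAh i (Classical.arbitrary M) k).trans (le_Astar Ah i _ k)
  refine Finset.sum_le_sum fun i _ ↦ ?_
  rcases hf : f i with _ | ⟨_ | j, k⟩
  · simp [star, hf]
  · simpa [star, hf] using direct_le i k
  · simpa [star, hf] using le_Astar Ah i j k

theorem mval_triangle [LinearOrder M] (A : B → S → ℝ) (Ah : B → M → S → ℝ) (g : B → Option S) :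
    mval A Ah (triangle Ah g) = m2val (Astar Ah) g := by
  refine Finset.sum_congr rfl fun i _ ↦ ?_
  rcases hg : g i with _ | k
  · simp [triangle, hg]
  · simpa [triangle, hg] using apply_bestMid Ah i k

end Value

section Coalition

variable {B M S : Type*} [Fintype B] [Fintype S]

@[simp]
theorem inl_mem_bsPart {T : Finset (Player B M S)} {i : B} :
    Sum.inl i ∈ bsPart T ↔ buyer i ∈ T := by
  simp [bsPart]

@[simp]
theorem inr_mem_bsPart {T : Finset (Player B M S)} {k : S} :
    Sum.inr k ∈ bsPart T ↔ seller k ∈ T := by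
  simp [bsPart]

theorem bsPart_univ [Fintype M] :
    bsPart (Finset.univ : Finset (Player B M S)) = Finset.univ := by
  ext (i | k) <;> simp

theorem IsMatching.isMatching2_star {T : Finset (Player B M S)} {f : MMatch B M S}
    (hf : IsMatching T f) : IsMatching2 (bsPart T) (star f) := by
  obtain ⟨hmem, hinj⟩ := hf
  have exists_trade {i : B} {k : S} (h : star f i = some k) : ∃ o, f i = some (o, k) := by
    simpa [star] using h
  refine ⟨fun i k h ↦ ?_, fun i i' k h h' ↦ ?_⟩
  · obtain ⟨o, ho⟩ := exists_trade h
    obtain ⟨hi, hk, -⟩ := hmem i o k ho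
    exact ⟨inl_mem_bsPart.mpr hi, inr_mem_bsPart.mpr hk⟩
  · obtain ⟨o, ho⟩ := exists_trade h
    obtain ⟨o', ho'⟩ := exists_trade h'
    exact hinj i i' o o' k ho ho'

theorem IsMatching2.isMatching_triangle [Fintype M] [Nonempty M] [LinearOrder M]
    {T : Finset (Player B M S)} (hT : ∀ j, mid j ∈ T) (Ah : B → M → S → ℝ)
    {g : B → Option S} (hg : IsMatching2 (bsPart T) g) : IsMatching T (triangle Ah g) := by
  obtain ⟨hmem, hinj⟩ := hg
  have pair_of_trade {i : B} {o : Option M} {k : S}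
      (h : triangle Ah g i = some (o, k)) : g i = some k := by
    obtain ⟨_, hk, heq⟩ := Option.map_eq_some_iff.mp h
    exact hk.trans (congrArg some (Prod.ext_iff.mp heq).2)
  refine ⟨fun i o k h ↦ ?_, fun i i' o o' k h h' ↦
    hinj i i' k (pair_of_trade h) (pair_of_trade h')⟩
  obtain ⟨hi, hk⟩ := hmem i k (pair_of_trade h)
  exact ⟨inl_mem_bsPart.mp hi, inr_mem_bsPart.mp hk, fun j _ ↦ hT j⟩

end Coalition

theorem vGame_univ_eq_wGame_univ_general
    {B M S : Type*} [Fintype B] [Fintype M] [Fintype S] [Nonempty M]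
    {A : B → S → ℝ} {Ah : B → M → S → ℝ} (hAh : ∀ i j k, A i k ≤ Ah i j k)
    {T : Finset (Player B M S)} (hT : ∀ j, mid j ∈ T) :
    vGame A Ah T = wGame (Astar Ah) (bsPart T) := by
  -- `triangle` breaks ties between best middlemen by a linear order; any order will do.
  obtain ⟨_, -⟩ := exists_wellFoundedLT M
  apply csSup_eq_csSup_of_forall_exists_le
  · rintro _ ⟨f, hf, rfl⟩
    exact ⟨_, ⟨star f, hf.isMatching2_star, rfl⟩, mval_le_m2val_star hAh f⟩
  · rintro _ ⟨g, hg, rfl⟩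
    exact ⟨_, ⟨triangle Ah g, hg.isMatching_triangle hT Ah, rfl⟩, (mval_triangle A Ah g).ge⟩

/-- the optimum values of the market with middlemen and of the associated
two-sided assignment market coincide: `v_γ(N) = w_γ*(B ∪ S)`. -/
theorem vGame_univ_eq_wGame_univ
    {B M S : Type*} [Fintype B] [Fintype M] [Fintype S]
    [Nonempty B] [Nonempty M] [Nonempty S]
    (A : B → S → ℝ) (Ah : B → M → S → ℝ)
    (hA : ∀ i k, 0 ≤ A i k) (hAh : ∀ i j k, A i k ≤ Ah i j k) :
    vGame A Ah Finset.univ = wGame (Astar Ah) Finset.univ := by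
  rw [vGame_univ_eq_wGame_univ_general hAh fun j ↦ Finset.mem_univ (mid j), bsPart_univ]

end Middlemen
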